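/- Let T : [0,1] → [0,1] be a Markov interval map satisfying hypotheses (A1)–(A4). Then T is exact with respect to Lebesgue measure: every Borel set A in the tail σ-algebra 𝒯 := ⋂_{n≥0} T^{-n}(Borel σ-algebra of [0,1]) satisfies Leb(A) = 0 or Leb([0,1] \ A) = 0. -/

import Mathlib

open MeasureTheory Set Filter

/-- An interval map `T : [0,1] → [0,1]` which is Markov with respect to the
partition `{[a_j, a_{j+1}]}` given by the strictly increasing sequence
`0 = a_0 < a_1 < ⋯` with supremum `1`, satisfying hypotheses (A1)–(A4).
The branch extensions are `φ j`, with first and second derivatives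
`φd j` and `φdd j` (taken within `[a_j, a_{j+1}]`). -/
structure IntervalMapSetup where
  T : ℝ → ℝ
  a : ℕ → ℝ
  φ : ℕ → ℝ → ℝ
  φd : ℕ → ℝ → ℝ
  φdd : ℕ → ℝ → ℝ
  Λ : ℝ
  K : ℝ
  β : ℝ
  c₁ : ℝ
  c₂ : ℝ
  ha0 : a 0 = 0
  ha_mono : StrictMono a
  ha_lt : ∀ j, a j < 1
  ha_lim : Tendsto a atTop (nhds 1)
  hT_maps : MapsTo T (Icc 0 1) (Icc 0 1)
  -- `T` coincides with the branch `φ j` on the open interval `(a_j, a_{j+1})`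
  hT_eq : ∀ j, ∀ x ∈ Ioo (a j) (a (j+1)), T x = φ j x
  -- (A1): each branch is a bijection onto `[0,1]`, `C²` up to the boundary
  hφ_bij : ∀ j, BijOn (φ j) (Icc (a j) (a (j+1))) (Icc 0 1)
  hφ_d : ∀ j, ∀ x ∈ Icc (a j) (a (j+1)),
    HasDerivWithinAt (φ j) (φd j x) (Icc (a j) (a (j+1))) x
  hφ_dd : ∀ j, ∀ x ∈ Icc (a j) (a (j+1)),
    HasDerivWithinAt (φd j) (φdd j x) (Icc (a j) (a (j+1))) x
  hφdd_cont : ∀ j, ContinuousOn (φdd j) (Icc (a j) (a (j+1)))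
  -- (A2): uniform expansion on branches `j ≥ 1`
  hΛ : 1 < Λ
  hA2 : ∀ j, 1 ≤ j → ∀ x ∈ Icc (a j) (a (j+1)), Λ ≤ |φd j x|
  -- (A3): distortion bound
  hK : 0 < K
  hA3 : ∀ j, ∀ x ∈ Icc (a j) (a (j+1)), |φdd j x| / (φd j x) ^ 2 ≤ K
  -- (A4): indifferent fixed point at 0
  hβ : 0 ≤ β
  hc₁ : 0 < c₁
  hc₁₂ : c₁ < c₂
  hA4_conv : ConvexOn ℝ (Icc (a 0) (a 1)) (φ 0)
  hA4_fix : φ 0 0 = 0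
  hA4_d1 : φd 0 0 = 1
  hA4_exp : ∀ x : ℝ, 0 < x → x ≤ a 1 → 1 < φd 0 x
  hA4_dd : ∀ x ∈ Ioo (0:ℝ) (a 1), c₁ * x ^ β ≤ φdd 0 x ∧ φdd 0 x ≤ c₂ * x ^ β

namespace IntervalMapSetup

variable (S : IntervalMapSetup)

lemma a_lt (j : ℕ) : S.a j < S.a (j+1) := S.ha_mono (Nat.lt_succ_self j)

lemma a_nonneg (j : ℕ) : 0 ≤ S.a j := by
  rw [← S.ha0]; exact S.ha_mono.monotone (Nat.zero_le j)

lemma a1_pos : 0 < S.a 1 := by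
  have := S.a_lt 0; rwa [S.ha0] at this

lemma I_sub (j : ℕ) {x : ℝ} (hx : x ∈ Icc (S.a j) (S.a (j+1))) : x ∈ Icc (0:ℝ) 1 :=
  ⟨(S.a_nonneg j).trans hx.1, hx.2.trans (S.ha_lt _).le⟩

lemma Ioo_sub (j : ℕ) {x : ℝ} (hx : x ∈ Ioo (S.a j) (S.a (j+1))) : x ∈ Ioo (0:ℝ) 1 :=
  ⟨(S.a_nonneg j).trans_lt hx.1, hx.2.trans (S.ha_lt _)⟩

lemma φd_ge_one (j : ℕ) {x : ℝ} (hx : x ∈ Icc (S.a j) (S.a (j+1))) : 1 ≤ |S.φd j x| := by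
  rcases Nat.eq_zero_or_pos j with rfl | hj
  · rw [S.ha0] at hx
    rcases hx.1.eq_or_lt with h | h
    · rw [← h, S.hA4_d1]; simp
    · exact (S.hA4_exp x h hx.2).le.trans (le_abs_self _)
  · exact S.hΛ.le.trans (S.hA2 j hj x hx)

lemma φd_ne (j : ℕ) {x : ℝ} (hx : x ∈ Icc (S.a j) (S.a (j+1))) : S.φd j x ≠ 0 := by
  have := S.φd_ge_one j hx
  intro h; rw [h] at this; norm_num at this

lemma φ_cont (j : ℕ) : ContinuousOn (S.φ j) (Icc (S.a j) (S.a (j+1))) :=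
  fun x hx => (S.hφ_d j x hx).continuousWithinAt

lemma φd_cont (j : ℕ) : ContinuousOn (S.φd j) (Icc (S.a j) (S.a (j+1))) :=
  fun x hx => (S.hφ_dd j x hx).continuousWithinAt

lemma φ_mono (j : ℕ) : StrictMonoOn (S.φ j) (Icc (S.a j) (S.a (j+1))) ∨
    StrictAntiOn (S.φ j) (Icc (S.a j) (S.a (j+1))) :=
  ContinuousOn.strictMonoOn_of_injOn_Icc' (S.a_lt j).le (S.φ_cont j) (S.hφ_bij j).injOn

/-- log-derivative distortion, ordered points -/
lemma log_dist_lt (j : ℕ) {x y : ℝ} (hx : x ∈ Icc (S.a j) (S.a (j+1)))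
    (hy : y ∈ Icc (S.a j) (S.a (j+1))) (hxy : x < y) :
    |Real.log (S.φd j y) - Real.log (S.φd j x)| ≤ S.K * |S.φ j y - S.φ j x| := by
  have hsub : Icc x y ⊆ Icc (S.a j) (S.a (j+1)) := Icc_subset_Icc hx.1 hy.2
  have hnhds : ∀ t ∈ Ioo x y, Icc (S.a j) (S.a (j+1)) ∈ nhds t := fun t ht =>
    Icc_mem_nhds (hx.1.trans_lt ht.1) (ht.2.trans_le hy.2)
  obtain ⟨c, hc, h⟩ := exists_ratio_hasDerivAt_eq_ratio_slope
    (fun t => Real.log (S.φd j t)) (fun t => S.φdd j t / S.φd j t) hxy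
    (((S.φd_cont j).mono hsub).log (fun t ht => S.φd_ne j (hsub ht)))
    (fun t ht => ((S.hφ_dd j t (hsub (Ioo_subset_Icc_self ht))).hasDerivAt (hnhds t ht)).log
      (S.φd_ne j (hsub (Ioo_subset_Icc_self ht))))
    (S.φ j) (S.φd j) ((S.φ_cont j).mono hsub)
    (fun t ht => (S.hφ_d j t (hsub (Ioo_subset_Icc_self ht))).hasDerivAt (hnhds t ht))
  have hcI := hsub (Ioo_subset_Icc_self hc)
  have hne := S.φd_ne j hcI
  have e : Real.log (S.φd j y) - Real.log (S.φd j x)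
      = (S.φ j y - S.φ j x) * (S.φdd j c / (S.φd j c)^2) := by
    field_simp
    field_simp at h
    linarith
  rw [e, abs_mul, abs_div, abs_of_nonneg (sq_nonneg (S.φd j c)), mul_comm]
  exact mul_le_mul_of_nonneg_right (S.hA3 j c hcI) (abs_nonneg _)

lemma φd_dist (j : ℕ) {x y : ℝ} (hx : x ∈ Icc (S.a j) (S.a (j+1)))
    (hy : y ∈ Icc (S.a j) (S.a (j+1))) {d : ℝ} (hd : |S.φ j x - S.φ j y| ≤ d) :
    |S.φd j x| ≤ Real.exp (S.K * d) * |S.φd j y| := by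
  have h : |Real.log (S.φd j x) - Real.log (S.φd j y)| ≤ S.K * |S.φ j x - S.φ j y| := by
    rcases lt_trichotomy x y with h | h | h
    · rw [abs_sub_comm, abs_sub_comm (S.φ j x)]; exact S.log_dist_lt j hx hy h
    · simp [h]
    · exact S.log_dist_lt j hy hx h
  have h2 : Real.log (S.φd j x) ≤ S.K * d + Real.log (S.φd j y) := by
    have := (le_abs_self _).trans h
    have := mul_le_mul_of_nonneg_left hd S.hK.le
    linarith
  have hxp : 0 < |S.φd j x| := abs_pos.2 (S.φd_ne j hx)
  have hyp : 0 < |S.φd j y| := abs_pos.2 (S.φd_ne j hy)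
  rw [← Real.log_abs, ← Real.log_abs (S.φd j y)] at h2
  calc |S.φd j x| = Real.exp (Real.log |S.φd j x|) := (Real.exp_log hxp).symm
    _ ≤ Real.exp (S.K * d + Real.log |S.φd j y|) := Real.exp_le_exp.2 h2
    _ = _ := by rw [Real.exp_add, Real.exp_log hyp]

lemma mvt (j : ℕ) {p q : ℝ} (hp : p ∈ Icc (S.a j) (S.a (j+1)))
    (hq : q ∈ Icc (S.a j) (S.a (j+1))) :
    ∃ ξ ∈ Icc (S.a j) (S.a (j+1)), S.φ j ξ ∈ uIcc (S.φ j p) (S.φ j q) ∧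
      S.φ j p - S.φ j q = S.φd j ξ * (p - q) := by
  have key : ∀ p ∈ Icc (S.a j) (S.a (j+1)), ∀ q ∈ Icc (S.a j) (S.a (j+1)), p < q →
    ∃ ξ ∈ Icc (S.a j) (S.a (j+1)), S.φ j ξ ∈ uIcc (S.φ j p) (S.φ j q) ∧
      S.φ j p - S.φ j q = S.φd j ξ * (p - q) := by
    intro p hp q hq hpq
    have hsub : Icc p q ⊆ Icc (S.a j) (S.a (j+1)) := Icc_subset_Icc hp.1 hq.2
    obtain ⟨c, hc, h⟩ := exists_hasDerivAt_eq_slope (S.φ j) (S.φd j) hpq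
      ((S.φ_cont j).mono hsub)
      (fun t ht => (S.hφ_d j t (hsub (Ioo_subset_Icc_self ht))).hasDerivAt
        (Icc_mem_nhds (hp.1.trans_lt ht.1) (ht.2.trans_le hq.2)))
    have hcI := hsub (Ioo_subset_Icc_self hc)
    refine ⟨c, hcI, ?_, ?_⟩
    · rw [mem_uIcc]
      rcases S.φ_mono j with hm | hm
      · exact Or.inl ⟨(hm hp hcI hc.1).le, (hm hcI hq hc.2).le⟩
      · exact Or.inr ⟨(hm hcI hq hc.2).le, (hm hp hcI hc.1).le⟩
    · rw [h]
      have : q - p ≠ 0 := by linarith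
      field_simp
      ring
  rcases lt_trichotomy p q with h | h | h
  · exact key p hp q hq h
  · subst h; exact ⟨p, hp, by simp, by simp⟩
  · obtain ⟨ξ, h1, h2, h3⟩ := key q hq p hp h
    exact ⟨ξ, h1, by rwa [uIcc_comm], by linarith⟩

/-- inverse branches -/
noncomputable def ψ (j : ℕ) : ℝ → ℝ := Function.invFunOn (S.φ j) (Icc (S.a j) (S.a (j+1)))

lemma ψ_mem (j : ℕ) {y : ℝ} (hy : y ∈ Icc (0:ℝ) 1) : S.ψ j y ∈ Icc (S.a j) (S.a (j+1)) :=
  Function.invFunOn_mem ((S.hφ_bij j).surjOn hy)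

lemma φ_ψ (j : ℕ) {y : ℝ} (hy : y ∈ Icc (0:ℝ) 1) : S.φ j (S.ψ j y) = y :=
  Function.invFunOn_eq ((S.hφ_bij j).surjOn hy)

lemma ψ_φ (j : ℕ) {x : ℝ} (hx : x ∈ Icc (S.a j) (S.a (j+1))) : S.ψ j (S.φ j x) = x := by
  have h := (S.hφ_bij j).mapsTo hx
  exact (S.hφ_bij j).injOn (S.ψ_mem j h) hx (S.φ_ψ j h)

lemma ψ_mem01 (j : ℕ) {y : ℝ} (hy : y ∈ Icc (0:ℝ) 1) : S.ψ j y ∈ Icc (0:ℝ) 1 :=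
  S.I_sub j (S.ψ_mem j hy)

lemma ψ_inj (j : ℕ) : InjOn (S.ψ j) (Icc (0:ℝ) 1) := by
  intro x hx y hy h
  rw [← S.φ_ψ j hx, h, S.φ_ψ j hy]

lemma φ_endpoints (j : ℕ) {x : ℝ} (hx : x ∈ Icc (S.a j) (S.a (j+1)))
    (h : S.φ j x ∈ Ioo (0:ℝ) 1) : x ∈ Ioo (S.a j) (S.a (j+1)) := by
  have h0 : (0:ℝ) ∈ Icc (0:ℝ) 1 := by simp
  have h1 : (1:ℝ) ∈ Icc (0:ℝ) 1 := by simp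
  have m0 := S.ψ_mem j h0
  have m1 := S.ψ_mem j h1
  have e0 := S.φ_ψ j h0
  have e1 := S.φ_ψ j h1
  have hl : S.a j ∈ Icc (S.a j) (S.a (j+1)) := ⟨le_rfl, (S.a_lt j).le⟩
  have hr : S.a (j+1) ∈ Icc (S.a j) (S.a (j+1)) := ⟨(S.a_lt j).le, le_rfl⟩
  constructor
  · refine lt_of_le_of_ne hx.1 ?_
    intro hh
    rcases S.φ_mono j with hm | hm
    · have := hm.monotoneOn hx m0 (by rw [← hh]; exact m0.1)
      rw [e0] at this; exact absurd h.1 (not_lt.2 this)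
    · have := hm.antitoneOn hx m1 (by rw [← hh]; exact m1.1)
      rw [e1] at this; exact absurd h.2 (not_lt.2 this)
  · refine lt_of_le_of_ne hx.2 ?_
    intro hh
    rcases S.φ_mono j with hm | hm
    · have := hm.monotoneOn m1 hx (by rw [hh]; exact m1.2)
      rw [e1] at this; exact absurd h.2 (not_lt.2 this)
    · have := hm.antitoneOn m0 hx (by rw [hh]; exact m0.2)
      rw [e0] at this; exact absurd h.1 (not_lt.2 this)

lemma ψ_mem_Ioo (j : ℕ) {y : ℝ} (hy : y ∈ Ioo (0:ℝ) 1) :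
    S.ψ j y ∈ Ioo (S.a j) (S.a (j+1)) := by
  have hy' := Ioo_subset_Icc_self hy
  apply S.φ_endpoints j (S.ψ_mem j hy')
  rwa [S.φ_ψ j hy']

/-- betweenness -/
lemma ψ_betw (j : ℕ) {x y t : ℝ} (hx : x ∈ Icc (0:ℝ) 1) (hy : y ∈ Icc (0:ℝ) 1)
    (ht : t ∈ uIcc x y) : S.ψ j t ∈ uIcc (S.ψ j x) (S.ψ j y) := by
  have ht01 : t ∈ Icc (0:ℝ) 1 := (uIcc_subset_Icc hx hy) ht
  have mx := S.ψ_mem j hx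
  have my := S.ψ_mem j hy
  have mt := S.ψ_mem j ht01
  rw [mem_uIcc] at ht ⊢
  rw [← S.φ_ψ j hx, ← S.φ_ψ j hy, ← S.φ_ψ j ht01] at ht
  rcases S.φ_mono j with hm | hm
  · rw [hm.le_iff_le mx mt, hm.le_iff_le mt my, hm.le_iff_le my mt, hm.le_iff_le mt mx] at ht
    exact ht
  · rw [hm.le_iff_ge mx mt, hm.le_iff_ge mt my, hm.le_iff_ge my mt, hm.le_iff_ge mt mx] at ht
    tauto

lemma ψ_contr (j : ℕ) {x y : ℝ} (hx : x ∈ Icc (0:ℝ) 1) (hy : y ∈ Icc (0:ℝ) 1) {L : ℝ}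
    (hL : ∀ t ∈ Icc (S.a j) (S.a (j+1)), L ≤ |S.φd j t|) :
    L * |S.ψ j x - S.ψ j y| ≤ |x - y| := by
  obtain ⟨ξ, h1, -, h3⟩ := S.mvt j (S.ψ_mem j hx) (S.ψ_mem j hy)
  rw [S.φ_ψ j hx, S.φ_ψ j hy] at h3
  rw [h3, abs_mul]
  exact mul_le_mul_of_nonneg_right (hL ξ h1) (abs_nonneg _)

lemma ψ_contr1 (j : ℕ) {x y : ℝ} (hx : x ∈ Icc (0:ℝ) 1) (hy : y ∈ Icc (0:ℝ) 1) :
    |S.ψ j x - S.ψ j y| ≤ |x - y| := by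
  have := S.ψ_contr j hx hy (L := 1) (fun t ht => S.φd_ge_one j ht)
  linarith

/-- four points at mutual distance at most `d` -/
def Close (x y u v d : ℝ) : Prop :=
  |x - u| ≤ d ∧ |x - v| ≤ d ∧ |y - u| ≤ d ∧ |y - v| ≤ d ∧ |x - y| ≤ d ∧ |u - v| ≤ d

lemma close_of (f : ℝ → ℝ) {W : Set ℝ} {d : ℝ} (h : ∀ x ∈ W, ∀ y ∈ W, |f x - f y| ≤ d)
    {x y u v : ℝ} (hx : x ∈ W) (hy : y ∈ W) (hu : u ∈ W) (hv : v ∈ W) :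
    Close (f x) (f y) (f u) (f v) d :=
  ⟨h _ hx _ hu, h _ hx _ hv, h _ hy _ hu, h _ hy _ hv, h _ hx _ hy, h _ hu _ hv⟩

lemma close_contr (f : ℝ → ℝ) {W : Set ℝ} {d r : ℝ} (hr : 0 ≤ r)
    (h : ∀ x ∈ W, ∀ y ∈ W, |f x - f y| ≤ r * |x - y|)
    {x y u v : ℝ} (hx : x ∈ W) (hy : y ∈ W) (hu : u ∈ W) (hv : v ∈ W) (hc : Close x y u v d) :
    Close (f x) (f y) (f u) (f v) (r * d) := by
  have k : ∀ x ∈ W, ∀ y ∈ W, |x - y| ≤ d → |f x - f y| ≤ r * d := fun x hx y hy hh =>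
    (h x hx y hy).trans (mul_le_mul_of_nonneg_left hh hr)
  obtain ⟨h1, h2, h3, h4, h5, h6⟩ := hc
  exact ⟨k _ hx _ hu h1, k _ hx _ hv h2, k _ hy _ hu h3, k _ hy _ hv h4, k _ hx _ hy h5,
    k _ hu _ hv h6⟩

lemma abs_sub_le_of_uIcc {x y u v s t d : ℝ} (hs : s ∈ uIcc x y) (ht : t ∈ uIcc u v)
    (hc : Close x y u v d) : |s - t| ≤ d := by
  obtain ⟨h1, h2, h3, h4, -, -⟩ := hc
  rw [abs_le] at *
  rw [mem_uIcc] at hs ht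
  rcases hs with hs | hs <;> rcases ht with ht | ht <;> constructor <;> linarith [h1.1, h1.2,
    h2.1, h2.2, h3.1, h3.2, h4.1, h4.2, hs.1, hs.2, ht.1, ht.2]

lemma ψ_dist (j : ℕ) {x y u v d : ℝ} (hx : x ∈ Icc (0:ℝ) 1) (hy : y ∈ Icc (0:ℝ) 1)
    (hu : u ∈ Icc (0:ℝ) 1) (hv : v ∈ Icc (0:ℝ) 1) (hc : Close x y u v d) :
    |S.ψ j x - S.ψ j y| * |u - v| ≤ Real.exp (S.K * d) * (|S.ψ j u - S.ψ j v| * |x - y|) := by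
  obtain ⟨ξ, h1, h2, h3⟩ := S.mvt j (S.ψ_mem j hx) (S.ψ_mem j hy)
  obtain ⟨η, k1, k2, k3⟩ := S.mvt j (S.ψ_mem j hu) (S.ψ_mem j hv)
  rw [S.φ_ψ j hx, S.φ_ψ j hy] at h3 h2
  rw [S.φ_ψ j hu, S.φ_ψ j hv] at k3 k2
  have hd : |S.φ j η - S.φ j ξ| ≤ d := by
    rw [abs_sub_comm]; exact abs_sub_le_of_uIcc h2 k2 hc
  have := S.φd_dist j k1 h1 hd
  rw [h3, k3, abs_mul, abs_mul]
  have hP : 0 ≤ |S.ψ j x - S.ψ j y| * |S.ψ j u - S.ψ j v| := by positivity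
  nlinarith [mul_le_mul_of_nonneg_left this hP]

/-- composition of distortion bounds -/
lemma comp_dist {p q a b s r e1 e2 : ℝ} (hp : 0 ≤ p) (hq : 0 ≤ q) (hb : 0 ≤ b) (hr : 0 ≤ r)
    (hs : 0 ≤ s) (hq0 : q = 0 → a = 0) (hp0 : p = 0 → s = 0)
    (h1 : a * p ≤ Real.exp e2 * (b * q)) (h2 : q * s ≤ Real.exp e1 * (p * r)) :
    a * s ≤ Real.exp (e1 + e2) * (b * r) := by
  rcases hq.eq_or_lt with h | hq
  · rw [hq0 h.symm, zero_mul]; positivity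
  rcases hp.eq_or_lt with h | hp
  · rw [hp0 h.symm, mul_zero]; positivity
  have := mul_le_mul h1 h2 (by positivity) (by positivity)
  rw [Real.exp_add]
  have hpq : 0 < p * q := mul_pos hp hq
  refine le_of_mul_le_mul_right ?_ hpq
  nlinarith

end IntervalMapSetup

namespace IntervalMapSetup

variable (S : IntervalMapSetup)

/-- tail systems: `B n = T⁻¹ (B (n+1))` on the open branches -/
def Tail (B : ℕ → Set ℝ) : Prop :=
  ∀ n j, ∀ x ∈ Ioo (S.a j) (S.a (j+1)), x ∈ B n ↔ S.φ j x ∈ B (n+1)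

/-- properties of compositions of inverse branches -/
structure Nice (g : ℝ → ℝ) (r : ℝ) (n : ℕ) : Prop where
  maps : MapsTo g (Icc 0 1) (Icc 0 1)
  inj : InjOn g (Icc 0 1)
  betw : ∀ x ∈ Icc (0:ℝ) 1, ∀ y ∈ Icc (0:ℝ) 1, ∀ t ∈ uIcc x y, g t ∈ uIcc (g x) (g y)
  contr : ∀ x ∈ Icc (0:ℝ) 1, ∀ y ∈ Icc (0:ℝ) 1, |g x - g y| ≤ r * |x - y|
  maps' : MapsTo g (Ioo 0 1) (Ioo 0 1)
  tail : ∀ B, S.Tail B → ∀ k, ∀ y ∈ Ioo (0:ℝ) 1, g y ∈ B k ↔ y ∈ B (k+n)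

variable {S} in
lemma Nice.comp {g h : ℝ → ℝ} {r s : ℝ} {n m : ℕ} (hg : S.Nice g r n) (hh : S.Nice h s m)
    (hr : 0 ≤ r) : S.Nice (g ∘ h) (r * s) (n + m) where
  maps := hg.maps.comp hh.maps
  inj := hg.inj.comp hh.inj hh.maps
  betw x hx y hy t ht := hg.betw _ (hh.maps hx) _ (hh.maps hy) _ (hh.betw x hx y hy t ht)
  contr x hx y hy := (hg.contr _ (hh.maps hx) _ (hh.maps hy)).trans (by
    rw [mul_assoc]; exact mul_le_mul_of_nonneg_left (hh.contr x hx y hy) hr)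
  maps' := hg.maps'.comp hh.maps'
  tail B hB k y hy := by
    rw [Function.comp, hg.tail B hB k _ (hh.maps' hy), hh.tail B hB _ y hy, add_assoc]

lemma nice_id : S.Nice id 1 0 where
  maps := fun _ h => h
  inj := fun _ _ _ _ h => h
  betw _ _ _ _ _ ht := ht
  contr := by simp
  maps' := fun _ h => h
  tail _ _ _ _ _ := Iff.rfl

lemma nice_ψ (j : ℕ) {r : ℝ} (h : ∀ x ∈ Icc (0:ℝ) 1, ∀ y ∈ Icc (0:ℝ) 1,
    |S.ψ j x - S.ψ j y| ≤ r * |x - y|) : S.Nice (S.ψ j) r 1 where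
  maps := fun _ h => S.ψ_mem01 j h
  inj := S.ψ_inj j
  betw x hx y hy t ht := S.ψ_betw j hx hy ht
  contr := h
  maps' := fun _ h => S.Ioo_sub j (S.ψ_mem_Ioo j h)
  tail B hB k y hy := by
    rw [hB k j _ (S.ψ_mem_Ioo j hy), S.φ_ψ j (Ioo_subset_Icc_self hy)]

lemma nice_ψ0 (l : ℕ) : S.Nice ((S.ψ 0)^[l]) 1 l := by
  induction l with
  | zero => exact S.nice_id
  | succ l ih =>
    have := ih.comp (S.nice_ψ 0 (r := 1) (fun x hx y hy => by
      rw [one_mul]; exact S.ψ_contr1 0 hx hy)) zero_le_one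
    rw [one_mul] at this
    exact this

lemma nice_ψj {j : ℕ} (hj : 1 ≤ j) : S.Nice (S.ψ j) S.Λ⁻¹ 1 := by
  apply S.nice_ψ
  intro x hx y hy
  have := S.ψ_contr j hx hy (S.hA2 j hj)
  rw [inv_mul_eq_div, le_div_iff₀ (by linarith [S.hΛ])]
  linarith

lemma zero_mem_I0 : (0:ℝ) ∈ Icc (S.a 0) (S.a (0+1)) := by
  rw [S.ha0]; exact ⟨le_rfl, S.a1_pos.le⟩

lemma ψ0_zero : S.ψ 0 0 = 0 := by
  have := S.ψ_φ 0 S.zero_mem_I0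
  rwa [S.hA4_fix] at this

lemma ψ0_le {x : ℝ} (hx : x ∈ Icc (0:ℝ) 1) : S.ψ 0 x ≤ x := by
  have h := S.ψ_contr1 0 hx (y := 0) (by simp)
  rw [S.ψ0_zero, sub_zero, sub_zero, abs_of_nonneg hx.1,
    abs_of_nonneg (S.ψ_mem01 0 hx).1] at h
  exact h

lemma φ0_a1 : S.φ 0 (S.a 1) = 1 := by
  have ha : S.a 1 ∈ Icc (S.a 0) (S.a (0+1)) := ⟨(S.a_lt 0).le, le_rfl⟩
  have h1 : (1:ℝ) ∈ Icc (0:ℝ) 1 := by simp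
  have hle := (S.hφ_bij 0).mapsTo ha
  rcases S.φ_mono 0 with hm | hm
  · have := hm.monotoneOn (S.ψ_mem 0 h1) ha (S.ψ_mem 0 h1).2
    rw [S.φ_ψ 0 h1] at this
    exact le_antisymm hle.2 this
  · have := hm S.zero_mem_I0 ha S.a1_pos
    rw [S.hA4_fix] at this
    exact absurd hle.1 (not_le.2 this)

lemma ψ0_one : S.ψ 0 1 = S.a 1 := by
  rw [← S.φ0_a1]
  exact S.ψ_φ 0 ⟨(S.a_lt 0).le, le_rfl⟩

/-- the points `ψ₀^i 1` -/
noncomputable def yy (i : ℕ) : ℝ := (S.ψ 0)^[i] 1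

lemma yy_mem (i : ℕ) : S.yy i ∈ Icc (0:ℝ) 1 := (S.nice_ψ0 i).maps (by simp)

lemma yy_succ (i : ℕ) : S.yy (i+1) = (S.ψ 0)^[i] (S.a 1) := by
  rw [yy, Function.iterate_succ_apply, S.ψ0_one]

lemma yy_le (i : ℕ) : S.yy (i+1) ≤ S.yy i := by
  rw [yy, Function.iterate_succ_apply']
  exact S.ψ0_le (S.yy_mem i)

lemma Y_sub {x : ℝ} (hx : x ∈ Icc (S.a 1) 1) : x ∈ Icc (0:ℝ) 1 := ⟨S.a1_pos.le.trans hx.1, hx.2⟩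

lemma it_mem (i : ℕ) {x : ℝ} (hx : x ∈ Icc (S.a 1) 1) :
    (S.ψ 0)^[i] x ∈ Icc (S.yy (i+1)) (S.yy i) := by
  have h := (S.nice_ψ0 i).betw (S.a 1) ⟨S.a1_pos.le, (S.ha_lt 1).le⟩ 1 (by simp) x
    (by rw [uIcc_of_le (S.ha_lt 1).le]; exact hx)
  rw [← S.yy_succ] at h
  change _ ∈ uIcc _ (S.yy i) at h
  rwa [uIcc_of_le (S.yy_le i)] at h

lemma it_zero {g : ℝ → ℝ} (hg : InjOn g (Icc (0:ℝ) 1)) {u v : ℝ} (hu : u ∈ Icc (0:ℝ) 1)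
    (hv : v ∈ Icc (0:ℝ) 1) (h : |g u - g v| = 0) : |u - v| = 0 := by
  rw [abs_eq_zero, sub_eq_zero] at h ⊢
  exact hg hu hv h

/-- general composition step -/
lemma step_dist (j : ℕ) {h : ℝ → ℝ} (hm : MapsTo h (Icc (0:ℝ) 1) (Icc (0:ℝ) 1))
    (hi : InjOn h (Icc (0:ℝ) 1)) {x y u v d e : ℝ} (hx : x ∈ Icc (0:ℝ) 1) (hy : y ∈ Icc (0:ℝ) 1)
    (hu : u ∈ Icc (0:ℝ) 1) (hv : v ∈ Icc (0:ℝ) 1) (hc : Close (h x) (h y) (h u) (h v) d)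
    (hd : |h x - h y| * |u - v| ≤ Real.exp e * (|h u - h v| * |x - y|)) :
    |S.ψ j (h x) - S.ψ j (h y)| * |u - v| ≤
      Real.exp (e + S.K * d) * (|S.ψ j (h u) - S.ψ j (h v)| * |x - y|) := by
  refine comp_dist (p := |h u - h v|) (q := |h x - h y|) (abs_nonneg _) (abs_nonneg _)
    (abs_nonneg _) (abs_nonneg _) (abs_nonneg _) ?_ ?_ ?_ hd
  · intro h0
    rw [abs_eq_zero, sub_eq_zero] at h0 ⊢
    rw [h0]
  · exact it_zero hi hu hv
  · exact S.ψ_dist j (hm hx) (hm hy) (hm hu) (hm hv) hc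

lemma exc1 (i : ℕ) {x y u v : ℝ} (hx : x ∈ Icc (S.a 1) 1) (hy : y ∈ Icc (S.a 1) 1)
    (hu : u ∈ Icc (S.a 1) 1) (hv : v ∈ Icc (S.a 1) 1) :
    |(S.ψ 0)^[i] x - (S.ψ 0)^[i] y| * |u - v| ≤
      Real.exp (S.K * (1 - S.yy i)) * (|(S.ψ 0)^[i] u - (S.ψ 0)^[i] v| * |x - y|) := by
  induction i with
  | zero => simp [yy, mul_comm]
  | succ i ih =>
    have hN := S.nice_ψ0 i
    have := S.step_dist 0 hN.maps hN.inj (S.Y_sub hx) (S.Y_sub hy) (S.Y_sub hu) (S.Y_sub hv)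
      (close_of _ (W := Icc (S.a 1) 1) (d := S.yy i - S.yy (i+1)) (by
        intro x hx y hy
        have h1 := S.it_mem i hx
        have h2 := S.it_mem i hy
        rw [abs_le]; constructor <;> linarith [h1.1, h1.2, h2.1, h2.2]) hx hy hu hv) ih
    simp only [Function.iterate_succ_apply']
    convert this using 3
    ring

lemma exc2 (i : ℕ) {x y : ℝ} (hx : x ∈ Icc (S.a 1) 1) (hy : y ∈ Icc (S.a 1) 1) :
    |(S.ψ 0)^[i] x - (S.ψ 0)^[i] y| ≤
      Real.exp S.K / (1 - S.a 1) * (S.yy i - S.yy (i+1)) * |x - y| := by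
  have hp : 0 < 1 - S.a 1 := by linarith [S.ha_lt 1]
  have h := S.exc1 i hx hy (u := 1) (v := S.a 1) ⟨(S.ha_lt 1).le, le_rfl⟩
    ⟨le_rfl, (S.ha_lt 1).le⟩
  rw [← S.yy_succ] at h
  change _ ≤ _ * (|S.yy i - _| * _) at h
  rw [abs_of_pos hp, abs_of_nonneg (by linarith [S.yy_le i] : 0 ≤ S.yy i - S.yy (i+1))] at h
  have he : Real.exp (S.K * (1 - S.yy i)) ≤ Real.exp S.K := by
    apply Real.exp_le_exp.2
    nlinarith [S.hK, (S.yy_mem i).1]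
  have h2 : 0 ≤ (S.yy i - S.yy (i+1)) * |x - y| :=
    mul_nonneg (by linarith [S.yy_le i]) (abs_nonneg _)
  have h3 := h.trans (mul_le_mul_of_nonneg_right he h2)
  rw [div_mul_eq_mul_div, div_mul_eq_mul_div, le_div_iff₀ hp]
  linarith

/-- distortion constant of an excursion -/
noncomputable def M : ℝ := S.K * (Real.exp S.K / (1 - S.a 1))

lemma M_nonneg : 0 ≤ S.M := by
  have hp : 0 < 1 - S.a 1 := by linarith [S.ha_lt 1]
  have := S.hK
  unfold M; positivity

lemma exc3 (i : ℕ) {x y u v d : ℝ} (hx : x ∈ Icc (S.a 1) 1) (hy : y ∈ Icc (S.a 1) 1)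
    (hu : u ∈ Icc (S.a 1) 1) (hv : v ∈ Icc (S.a 1) 1) (hc : Close x y u v d) :
    |(S.ψ 0)^[i] x - (S.ψ 0)^[i] y| * |u - v| ≤
      Real.exp (S.M * d * (1 - S.yy i)) * (|(S.ψ 0)^[i] u - (S.ψ 0)^[i] v| * |x - y|) := by
  have hp : 0 < 1 - S.a 1 := by linarith [S.ha_lt 1]
  induction i with
  | zero => simp [yy, mul_comm]
  | succ i ih =>
    have hN := S.nice_ψ0 i
    have := S.step_dist 0 hN.maps hN.inj (S.Y_sub hx) (S.Y_sub hy) (S.Y_sub hu) (S.Y_sub hv)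
      (close_contr _ (W := Icc (S.a 1) 1) (by
        have := S.yy_le i
        exact mul_nonneg (div_nonneg (Real.exp_pos _).le hp.le) (by linarith))
        (fun x hx y hy => S.exc2 i hx hy) hx hy hu hv hc) ih
    simp only [Function.iterate_succ_apply']
    convert this using 3
    unfold M
    ring

lemma block_dist (l : ℕ) {j : ℕ} (hj : 1 ≤ j) {x y u v d : ℝ} (hx : x ∈ Icc (0:ℝ) 1)
    (hy : y ∈ Icc (0:ℝ) 1) (hu : u ∈ Icc (0:ℝ) 1) (hv : v ∈ Icc (0:ℝ) 1)
    (hc : Close x y u v d) :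
    |((S.ψ 0)^[l] ∘ S.ψ j) x - ((S.ψ 0)^[l] ∘ S.ψ j) y| * |u - v| ≤
      Real.exp ((S.K + S.M) * d) *
        (|((S.ψ 0)^[l] ∘ S.ψ j) u - ((S.ψ 0)^[l] ∘ S.ψ j) v| * |x - y|) := by
  have hY : ∀ x ∈ Icc (0:ℝ) 1, S.ψ j x ∈ Icc (S.a 1) 1 := fun x hx =>
    ⟨(S.ha_mono.monotone hj).trans (S.ψ_mem j hx).1, (S.ψ_mem01 j hx).2⟩
  have hd : 0 ≤ d := (abs_nonneg _).trans hc.1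
  have hc' : Close (S.ψ j x) (S.ψ j y) (S.ψ j u) (S.ψ j v) d := by
    have := close_contr (S.ψ j) (W := Icc (0:ℝ) 1) zero_le_one
      (fun x hx y hy => by rw [one_mul]; exact S.ψ_contr1 j hx hy) hx hy hu hv hc
    rwa [one_mul] at this
  have h1 := S.exc3 l (hY x hx) (hY y hy) (hY u hu) (hY v hv) hc'
  have h2 := S.ψ_dist j hx hy hu hv hc
  have h3 := comp_dist (abs_nonneg _) (abs_nonneg _) (abs_nonneg _) (abs_nonneg _)
    (abs_nonneg _) (by
      intro h0
      rw [abs_eq_zero, sub_eq_zero] at h0 ⊢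
      rw [h0]) (it_zero (S.ψ_inj j) hu hv) h1 h2
  refine h3.trans (mul_le_mul_of_nonneg_right (Real.exp_le_exp.2 ?_) (by positivity))
  have : S.M * d * (1 - S.yy l) ≤ S.M * d := by
    have := mul_nonneg (mul_nonneg S.M_nonneg hd) (S.yy_mem l).1
    linarith
  linarith

/-- points whose orbit avoids partition points -/
def X : Set ℝ := {x | ∀ n, ∃ j, S.T^[n] x ∈ Ioo (S.a j) (S.a (j+1))}

lemma X_T {x : ℝ} (hx : x ∈ S.X) (l : ℕ) : S.T^[l] x ∈ S.X := by
  intro n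
  rw [← Function.iterate_add_apply]
  exact hx _

lemma back (l : ℕ) {x : ℝ} (h : ∀ i < l, S.T^[i] x ∈ Ioo (S.a 0) (S.a (0+1))) :
    (S.ψ 0)^[l] (S.T^[l] x) = x := by
  induction l with
  | zero => rfl
  | succ l ih =>
    rw [Function.iterate_succ_apply, Function.iterate_succ_apply' S.T,
      S.hT_eq 0 _ (h l (Nat.lt_succ_self l)),
      S.ψ_φ 0 (Ioo_subset_Icc_self (h l (Nat.lt_succ_self l)))]
    exact ih (fun i hi => h i (hi.trans (Nat.lt_succ_self l)))

lemma φ0_gt {x : ℝ} (hx : x ∈ Ioo (S.a 0) (S.a (0+1))) : x < S.φ 0 x := by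
  have hx0 : 0 < x := by have := hx.1; rwa [S.ha0] at this
  have hsub : Icc 0 x ⊆ Icc (S.a 0) (S.a (0+1)) := Icc_subset_Icc S.ha0.le hx.2.le
  obtain ⟨c, hc, h⟩ := exists_hasDerivAt_eq_slope (S.φ 0) (S.φd 0) hx0
    ((S.φ_cont 0).mono hsub)
    (fun t ht => (S.hφ_d 0 t (hsub (Ioo_subset_Icc_self ht))).hasDerivAt
      (Icc_mem_nhds (by rw [S.ha0]; exact ht.1) (ht.2.trans hx.2)))
  have := S.hA4_exp c hc.1 (hc.2.le.trans hx.2.le)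
  rw [h, S.hA4_fix, sub_zero, sub_zero, lt_div_iff₀ hx0] at this
  linarith

lemma escape (x : ℝ) : ∃ i, S.T^[i] x ∉ Ioo (S.a 0) (S.a (0+1)) := by
  by_contra! hcon
  set z : ℕ → ℝ := fun i => S.T^[i] x with hz
  have hs : ∀ i, z (i+1) = S.φ 0 (z i) := fun i => by
    simp only [hz]; rw [Function.iterate_succ_apply', S.hT_eq 0 _ (hcon i)]
  have hmem : ∀ i, z i ∈ Icc (0:ℝ) 1 := fun i =>
    Ioo_subset_Icc_self (S.Ioo_sub 0 (hcon i))
  have hψ : ∀ i, S.ψ 0 (z (i+1)) = z i := fun i => by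
    rw [hs, S.ψ_φ 0 (Ioo_subset_Icc_self (hcon i))]
  have hinc : ∀ i, z i < z (i+1) := fun i => by
    rw [hs]; exact S.φ0_gt (hcon i)
  have hgap : ∀ i, z 1 - z 0 ≤ z (i+1) - z i := by
    intro i
    induction i with
    | zero => exact le_rfl
    | succ i ih =>
      have := S.ψ_contr1 0 (hmem (i+1+1)) (hmem (i+1))
      rw [hψ, hψ, abs_of_pos (sub_pos.2 (hinc i)), abs_of_pos (sub_pos.2 (hinc (i+1)))] at this
      linarith
  have hlin : ∀ i : ℕ, z 0 + i * (z 1 - z 0) ≤ z i := by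
    intro i
    induction i with
    | zero => simp
    | succ i ih => push_cast; linarith [hgap i]
  obtain ⟨n, hn⟩ := exists_nat_gt (1 / (z 1 - z 0))
  have hpos : 0 < z 1 - z 0 := sub_pos.2 (hinc 0)
  rw [div_lt_iff₀ hpos] at hn
  linarith [hlin n, (hmem n).2, (hmem 0).1]

lemma first_block {x : ℝ} (hx : x ∈ S.X) : ∃ l j, 1 ≤ j ∧ ∃ t ∈ S.X,
    ((S.ψ 0)^[l] ∘ S.ψ j) t = x := by
  classical
  have hE := S.escape x
  set l := Nat.find hE with hl
  have h1 := Nat.find_spec hE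
  have h2 : ∀ i < l, S.T^[i] x ∈ Ioo (S.a 0) (S.a (0+1)) := fun i hi =>
    not_not.1 (Nat.find_min hE hi)
  obtain ⟨j, hj⟩ := hx l
  have hj1 : 1 ≤ j := by
    rcases Nat.eq_zero_or_pos j with h | h
    · subst h; exact absurd hj h1
    · exact h
  refine ⟨l, j, hj1, S.T^[l+1] x, S.X_T hx _, ?_⟩
  rw [Function.comp, Function.iterate_succ_apply' S.T, S.hT_eq j _ hj,
    S.ψ_φ j (Ioo_subset_Icc_self hj)]
  exact S.back l h2

lemma X_sub {x : ℝ} (hx : x ∈ S.X) : x ∈ Icc (0:ℝ) 1 := by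
  obtain ⟨j, hj⟩ := hx 0
  exact Ioo_subset_Icc_self (S.Ioo_sub j hj)

lemma cyl (m : ℕ) : ∀ x ∈ S.X, ∃ n g, S.Nice g (S.Λ⁻¹ ^ m) n ∧
    (∀ x ∈ Icc (0:ℝ) 1, ∀ y ∈ Icc (0:ℝ) 1, ∀ u ∈ Icc (0:ℝ) 1, ∀ v ∈ Icc (0:ℝ) 1,
      |g x - g y| * |u - v| ≤
        Real.exp ((S.K + S.M) * ∑ i ∈ Finset.range m, S.Λ⁻¹ ^ i) * (|g u - g v| * |x - y|)) ∧
    ∃ t ∈ Icc (0:ℝ) 1, g t = x := by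
  have hΛ : 0 ≤ S.Λ⁻¹ := inv_nonneg.2 (by linarith [S.hΛ])
  induction m with
  | zero =>
    intro x hx
    refine ⟨0, id, by simpa using S.nice_id, ?_, x, S.X_sub hx, rfl⟩
    intro x _ y _ u _ v _
    simp [mul_comm]
  | succ m ih =>
    intro x hx
    obtain ⟨l, j, hj, t, ht, rfl⟩ := S.first_block hx
    obtain ⟨n, g, hg, hd, s, hs, rfl⟩ := ih t ht
    have hG : S.Nice ((S.ψ 0)^[l] ∘ S.ψ j) S.Λ⁻¹ (l+1) := by
      have := (S.nice_ψ0 l).comp (S.nice_ψj hj) zero_le_one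
      rwa [one_mul] at this
    refine ⟨(l+1) + n, ((S.ψ 0)^[l] ∘ S.ψ j) ∘ g, ?_, ?_, s, hs, rfl⟩
    · rw [pow_succ']
      exact hG.comp hg hΛ
    · intro x hx y hy u hu v hv
      have hb := S.block_dist l hj (hg.maps hx) (hg.maps hy) (hg.maps hu) (hg.maps hv)
        (close_of g (W := Icc (0:ℝ) 1) (d := S.Λ⁻¹ ^ m) (by
          intro x hx y hy
          have h1 : |x - y| ≤ 1 := by
            rw [abs_le]; constructor <;> linarith [hx.1, hx.2, hy.1, hy.2]
          have h2 := mul_le_mul_of_nonneg_left h1 (pow_nonneg hΛ m)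
          rw [mul_one] at h2
          exact (hg.contr x hx y hy).trans h2) hx hy hu hv)
      have h3 := comp_dist (abs_nonneg _) (abs_nonneg _) (abs_nonneg _) (abs_nonneg _)
        (abs_nonneg _) (by
          intro h0
          rw [abs_eq_zero, sub_eq_zero] at h0 ⊢
          rw [h0]) (it_zero hg.inj hu hv) hb (hd x hx y hy u hu v hv)
      rw [Finset.sum_range_succ, mul_add]
      exact h3

lemma cover {x : ℝ} (hx : x ∈ Icc (0:ℝ) 1) (h1 : x ≠ 1) (h2 : x ∉ range S.a) :
    ∃ j, x ∈ Ioo (S.a j) (S.a (j+1)) := by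
  classical
  have hlt : x < 1 := lt_of_le_of_ne hx.2 h1
  have hE : ∃ j, x < S.a j := (S.ha_lim.eventually (lt_mem_nhds hlt)).exists
  have hs := Nat.find_spec hE
  rcases hn : Nat.find hE with _ | j
  · rw [hn, S.ha0] at hs; exact absurd hx.1 (not_le.2 hs)
  · rw [hn] at hs
    have := Nat.find_min hE (m := j) (by omega)
    refine ⟨j, lt_of_le_of_ne (not_lt.1 this) ?_, hs⟩
    intro h; exact h2 ⟨j, h⟩

lemma countable_pre {Z : Set ℝ} (hZ : Z.Countable) : (Icc (0:ℝ) 1 ∩ S.T ⁻¹' Z).Countable := by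
  have : Icc (0:ℝ) 1 ∩ S.T ⁻¹' Z ⊆ (insert 1 (range S.a)) ∪ ⋃ j, S.ψ j '' Z := by
    rintro x ⟨hx, hxZ⟩
    by_cases h : x ∈ insert 1 (range S.a)
    · exact Or.inl h
    · right
      rw [mem_insert_iff, not_or] at h
      obtain ⟨j, hj⟩ := S.cover hx h.1 h.2
      refine mem_iUnion.2 ⟨j, S.T x, hxZ, ?_⟩
      rw [S.hT_eq j x hj, S.ψ_φ j (Ioo_subset_Icc_self hj)]
  refine Countable.mono this ?_
  exact ((countable_range _).insert _).union (countable_iUnion fun j => hZ.image _)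

lemma countable_pre_n (n : ℕ) :
    (Icc (0:ℝ) 1 ∩ S.T^[n] ⁻¹' (insert 1 (range S.a))).Countable := by
  induction n with
  | zero => exact ((countable_range _).insert _).mono inter_subset_right
  | succ n ih =>
    refine (S.countable_pre ih).mono ?_
    rintro x ⟨hx, h⟩
    exact ⟨hx, S.hT_maps hx, h⟩

lemma ae_X : ∀ᵐ x : ℝ, x ∈ Icc (0:ℝ) 1 → x ∈ S.X := by
  have : ∀ n, ∀ᵐ x : ℝ, x ∉ (Icc (0:ℝ) 1 ∩ S.T^[n] ⁻¹' (insert 1 (range S.a))) := fun n =>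
    (S.countable_pre_n n).ae_notMem _
  filter_upwards [ae_all_iff.2 this] with x hx h01 n
  have h := hx n
  have hn : S.T^[n] x ∈ Icc (0:ℝ) 1 := S.hT_maps.iterate n h01
  have h' : S.T^[n] x ∉ insert 1 (range S.a) := fun h' => h ⟨h01, h'⟩
  rw [mem_insert_iff, not_or] at h'
  exact S.cover hn h'.1 h'.2

end IntervalMapSetup

namespace IntervalMapSetup

variable (S : IntervalMapSetup)

lemma vol_image_le {f : ℝ → ℝ} {s : Set ℝ} {C : ℝ} (hC : 0 ≤ C)
    (h : ∀ x ∈ s, ∀ y ∈ s, |f x - f y| ≤ C * |x - y|) :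
    volume (f '' s) ≤ ENNReal.ofReal C * volume s := by
  have hL : LipschitzOnWith (Real.toNNReal C) f s := by
    apply LipschitzOnWith.of_dist_le_mul
    intro x hx y hy
    rw [Real.dist_eq, Real.dist_eq, Real.coe_toNNReal _ hC]
    exact h x hx y hy
  have := hL.hausdorffMeasure_image_le (d := 1) zero_le_one
  rw [hausdorffMeasure_real, ENNReal.rpow_one] at this
  exact this

lemma vol_le_image {g : ℝ → ℝ} {s : Set ℝ} {C : ℝ} (hC : 0 ≤ C)
    (h : ∀ x ∈ s, ∀ y ∈ s, |x - y| ≤ C * |g x - g y|) :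
    volume s ≤ ENNReal.ofReal C * volume (g '' s) := by
  have hinj : InjOn g s := by
    intro x hx y hy hxy
    have := h x hx y hy
    rw [hxy, sub_self, abs_zero, mul_zero] at this
    exact sub_eq_zero.1 (abs_eq_zero.1 (le_antisymm this (abs_nonneg _)))
  have hinv : ∀ x ∈ s, Function.invFunOn g s (g x) = x := fun x hx =>
    hinj.leftInvOn_invFunOn hx
  have := vol_image_le (f := Function.invFunOn g s) (s := g '' s) hC (by
    rintro _ ⟨x, hx, rfl⟩ _ ⟨y, hy, rfl⟩
    rw [hinv x hx, hinv y hy]; exact h x hx y hy)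
  rwa [hinj.invFunOn_image Subset.rfl] at this

lemma uIcc_eq_ball (p q : ℝ) : uIcc p q = Metric.closedBall ((p + q) / 2) (|p - q| / 2) := by
  rw [Real.closedBall_eq_Icc]
  rcases le_total p q with h | h
  · rw [uIcc_of_le h, abs_of_nonpos (by linarith)]; congr 1 <;> ring
  · rw [uIcc_of_ge h, abs_of_nonneg (by linarith)]; congr 1 <;> ring

lemma vol_Icc_diff (B : Set ℝ) : volume (Icc (0:ℝ) 1 \ B) = volume (Ioo (0:ℝ) 1 \ B) :=
  measure_congr (Ioo_ae_eq_Icc.symm.diff (ae_eq_refl _))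

/-- uniform distortion constant -/
noncomputable def E0 : ℝ := Real.exp ((S.K + S.M) * (1 - S.Λ⁻¹)⁻¹)

lemma E0_pos : 0 < S.E0 := Real.exp_pos _

lemma exp_le_E0 (m : ℕ) :
    Real.exp ((S.K + S.M) * ∑ i ∈ Finset.range m, S.Λ⁻¹ ^ i) ≤ S.E0 := by
  have hΛ : 0 ≤ S.Λ⁻¹ := inv_nonneg.2 (by linarith [S.hΛ])
  have hΛ1 : S.Λ⁻¹ < 1 := inv_lt_one_of_one_lt₀ S.hΛ
  apply Real.exp_le_exp.2
  apply mul_le_mul_of_nonneg_left _ (add_nonneg S.hK.le S.M_nonneg)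
  rw [← tsum_geometric_of_lt_one hΛ hΛ1]
  exact (summable_geometric_of_lt_one hΛ hΛ1).sum_le_tsum _ (fun i _ => pow_nonneg hΛ i)

lemma main {B : ℕ → Set ℝ} (hB : S.Tail B) (hm : MeasurableSet (B 0))
    (h0 : volume (B 0 ∩ Icc 0 1) ≠ 0) {ε : ENNReal} (hε : ε ≠ 0) :
    ∃ n, volume (Icc 0 1 \ B n) ≤ ε := by
  have hΛ : 0 ≤ S.Λ⁻¹ := inv_nonneg.2 (by linarith [S.hΛ])
  have hΛ1 : S.Λ⁻¹ < 1 := inv_lt_one_of_one_lt₀ S.hΛ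
  set E := B 0 ∩ Icc (0:ℝ) 1 with hE
  have hEm : MeasurableSet E := hm.inter measurableSet_Icc
  have hne : NeBot (ae (volume.restrict E)) := by
    rw [ae_neBot]
    intro h
    exact h0 (Measure.restrict_eq_zero.1 h)
  obtain ⟨x, hx, hxX, hxE⟩ := ((IsUnifLocDoublingMeasure.ae_tendsto_measure_inter_div
    (volume : Measure ℝ) E 1).and ((ae_restrict_of_ae S.ae_X).and
      (ae_restrict_mem hEm))).exists
  have hxX := hxX hxE.2
  choose n g hg hd t ht hgt using fun m => S.cyl m x hxX
  have z0 : (0:ℝ) ∈ Icc (0:ℝ) 1 := by simp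
  have z1 : (1:ℝ) ∈ Icc (0:ℝ) 1 := by simp
  set L : ℕ → ℝ := fun m => |g m 0 - g m 1| with hL
  have hLpos : ∀ m, 0 < L m := fun m => by
    refine abs_pos.2 (sub_ne_zero.2 ?_)
    intro h
    exact zero_ne_one ((hg m).inj z0 z1 h)
  have hLle : ∀ m, L m ≤ S.Λ⁻¹ ^ m := fun m => by
    have := (hg m).contr 0 z0 1 z1
    simpa using this
  have hLlim : Tendsto (fun m => L m / 2) atTop (nhdsWithin 0 (Ioi 0)) := by
    refine tendsto_nhdsWithin_iff.2 ⟨?_, Eventually.of_forall fun m => half_pos (hLpos m)⟩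
    refine squeeze_zero (fun m => (half_pos (hLpos m)).le)
      (fun m => (half_le_self (hLpos m).le).trans (hLle m)) ?_
    exact tendsto_pow_atTop_nhds_zero_of_lt_one hΛ hΛ1
  have hmemC : ∀ m, ∀ t ∈ Icc (0:ℝ) 1, g m t ∈ uIcc (g m 0) (g m 1) := fun m t ht =>
    (hg m).betw 0 z0 1 z1 t (by rwa [uIcc_of_le zero_le_one])
  have hdens := hx (fun m => (g m 0 + g m 1) / 2) (fun m => L m / 2) hLlim
    (Eventually.of_forall fun m => by
      rw [one_mul, ← uIcc_eq_ball, ← hgt m]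
      exact hmemC m _ (ht m))
  simp only [hL, ← uIcc_eq_ball] at hdens
  have hvol : ∀ m, volume (uIcc (g m 0) (g m 1)) = ENNReal.ofReal (L m) := fun m => by
    rw [uIcc_eq_ball, Real.volume_closedBall]
    congr 1
    simp only [hL]; ring
  have hbound : ∀ m, volume (Icc 0 1 \ B (n m)) ≤ ENNReal.ofReal S.E0 *
      (1 - volume (E ∩ uIcc (g m 0) (g m 1)) / volume (uIcc (g m 0) (g m 1))) := by
    intro m
    have hvpos : volume (uIcc (g m 0) (g m 1)) ≠ 0 := by
      rw [hvol]; simpa using hLpos m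
    have hvtop : volume (uIcc (g m 0) (g m 1)) ≠ ⊤ := by
      rw [hvol]; exact ENNReal.ofReal_ne_top
    have e1 : 1 - volume (E ∩ uIcc (g m 0) (g m 1)) / volume (uIcc (g m 0) (g m 1))
        = volume (uIcc (g m 0) (g m 1) \ E) / volume (uIcc (g m 0) (g m 1)) := by
      have hadd : volume (uIcc (g m 0) (g m 1) \ E) / volume (uIcc (g m 0) (g m 1)) +
          volume (E ∩ uIcc (g m 0) (g m 1)) / volume (uIcc (g m 0) (g m 1)) = 1 := by
        rw [← ENNReal.add_div, add_comm, inter_comm, measure_inter_add_sdiff _ hEm,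
          ENNReal.div_self hvpos hvtop]
      refine (ENNReal.eq_sub_of_add_eq ?_ hadd).symm
      exact ne_top_of_le_ne_top ENNReal.one_ne_top (hadd ▸ le_add_self)
    rw [e1, vol_Icc_diff]
    have h1 := vol_le_image (g := g m) (s := Ioo (0:ℝ) 1 \ B (n m)) (C := S.E0 / L m)
      (div_nonneg S.E0_pos.le (hLpos m).le) (by
        rintro u ⟨hu, -⟩ v ⟨hv, -⟩
        have := hd m 0 z0 1 z1 u (Ioo_subset_Icc_self hu) v (Ioo_subset_Icc_self hv)
        have h2 := this.trans (mul_le_mul_of_nonneg_right (S.exp_le_E0 m) (by positivity))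
        rw [div_mul_eq_mul_div, le_div_iff₀ (hLpos m)]
        have e : |(0:ℝ) - 1| = 1 := by simp
        rw [e, mul_one] at h2
        linarith)
    refine h1.trans ?_
    rw [hvol, ENNReal.ofReal_div_of_pos (hLpos m), ENNReal.mul_div_right_comm.symm, mul_div_assoc]
    gcongr
    rintro _ ⟨u, ⟨hu, huB⟩, rfl⟩
    refine ⟨hmemC m u (Ioo_subset_Icc_self hu), fun hh => huB ?_⟩
    have := ((hg m).tail B hB 0 u hu).1 hh.1
    rwa [zero_add] at this
  have hlim : Tendsto (fun m => ENNReal.ofReal S.E0 *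
      (1 - volume (E ∩ uIcc (g m 0) (g m 1)) / volume (uIcc (g m 0) (g m 1)))) atTop
      (nhds 0) := by
    have := ENNReal.Tendsto.sub (tendsto_const_nhds (x := (1:ENNReal)) (f := atTop)) hdens
      (Or.inl ENNReal.one_ne_top)
    have := ENNReal.Tendsto.const_mul (a := ENNReal.ofReal S.E0) this
      (Or.inr ENNReal.ofReal_ne_top)
    simpa using this
  obtain ⟨m, hm⟩ := (hlim.eventually (gt_mem_nhds (pos_iff_ne_zero.2 hε))).exists
  exact ⟨n m, (hbound m).trans hm.le⟩

lemma next_bound {B : ℕ → Set ℝ} (hB : S.Tail B) (n : ℕ) :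
    volume (Icc 0 1 \ B (n+1)) ≤ ENNReal.ofReal (Real.exp S.K) * volume (Icc 0 1 \ B n) := by
  have h := vol_image_le (f := S.φ 0) (s := Ioo (S.a 0) (S.a (0+1)) \ B n)
    (C := Real.exp S.K) (Real.exp_pos _).le (by
      rintro x ⟨hx, -⟩ y ⟨hy, -⟩
      obtain ⟨ξ, h1, -, h3⟩ := S.mvt 0 (Ioo_subset_Icc_self hx) (Ioo_subset_Icc_self hy)
      rw [h3, abs_mul]
      apply mul_le_mul_of_nonneg_right _ (abs_nonneg _)
      have := S.φd_dist 0 h1 S.zero_mem_I0 (d := 1) (by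
        have := (S.hφ_bij 0).mapsTo h1
        rw [S.hA4_fix, sub_zero, abs_of_nonneg this.1]; exact this.2)
      rw [S.hA4_d1] at this
      simpa using this)
  rw [vol_Icc_diff]
  refine (measure_mono ?_).trans (h.trans ?_)
  · rintro y ⟨hy, hyB⟩
    have hI := S.ψ_mem_Ioo 0 hy
    have e := S.φ_ψ 0 (Ioo_subset_Icc_self hy)
    refine ⟨S.ψ 0 y, ⟨hI, fun hh => hyB ?_⟩, e⟩
    have := (hB n 0 _ hI).1 hh
    rwa [e] at this
  · gcongr
    intro x hx
    exact Ioo_subset_Icc_self (S.Ioo_sub 0 hx)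

lemma diff_null {B : ℕ → Set ℝ} (hB : S.Tail B) (hm : ∀ n, MeasurableSet (B n)) (k : ℕ) :
    volume ((B k \ B (k+1)) ∩ Icc 0 1) = 0 := by
  by_contra h0
  set M := ENNReal.ofReal (Real.exp S.K) with hM
  have hMtop : 1 + 1 + M ≠ ⊤ := by simp [hM]
  have hD : S.Tail (fun n => B (k+n) \ B (k+n+1)) := by
    intro n j x hx
    have h1 := hB (k+n) j x hx
    have h2 := hB (k+n+1) j x hx
    simp only [Set.mem_sdiff]
    rw [h1, h2]
    rfl
  obtain ⟨n, hn⟩ := S.main hD ((hm _).diff (hm _)) h0 (ε := (1 + 1 + M)⁻¹)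
    (ENNReal.inv_ne_zero.2 hMtop)
  set ε := (1 + 1 + M)⁻¹ with hε
  have e1 : volume (Icc 0 1 \ B (k+n)) ≤ ε :=
    le_trans (measure_mono (show _ ⊆ Icc (0:ℝ) 1 \ (B (k+n) \ B (k+n+1)) from fun x hx => ⟨hx.1, fun h => hx.2 h.1⟩)) hn
  have e2 : volume (Icc 0 1 ∩ B (k+n+1)) ≤ ε :=
    le_trans (measure_mono (show _ ⊆ Icc (0:ℝ) 1 \ (B (k+n) \ B (k+n+1)) from fun x hx => ⟨hx.1, fun h => h.2 hx.2⟩)) hn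
  have e3 : volume (Icc 0 1 \ B (k+n+1)) ≤ M * ε :=
    (S.next_bound hB _).trans (by gcongr)
  have e4 : volume (Icc (0:ℝ) 1) = 1 := by simp
  rw [← measure_inter_add_sdiff _ (hm (k+n+1))] at e4
  have e5 : (1:ENNReal) ≤ (1 + M) * ε := by
    rw [add_mul, one_mul]; exact e4.symm.le.trans (add_le_add e2 e3)
  have hεpos : ε ≠ 0 := ENNReal.inv_ne_zero.2 hMtop
  have hεtop : ε ≠ ⊤ := by
    rw [hε]; apply ENNReal.inv_ne_top.2; simp
  have e6 : (1 + 1 + M) * ε = 1 := ENNReal.mul_inv_cancel (by simp) hMtop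
  rw [add_assoc, add_mul, one_mul] at e6
  have e7 : ε + (1 + M) * ε ≤ 0 + (1 + M) * ε := by rw [e6, zero_add]; exact e5
  have := (ENNReal.add_le_add_iff_right (by
    refine ENNReal.mul_ne_top ?_ hεtop
    simp [hM])).1 e7
  exact hεpos (le_antisymm this (zero_le))

lemma compl_tail {B : ℕ → Set ℝ} (hB : S.Tail B) : S.Tail (fun n => (B n)ᶜ) :=
  fun n j x hx => not_congr (hB n j x hx)

lemma vol_const {B : ℕ → Set ℝ} (hB : S.Tail B) (hm : ∀ n, MeasurableSet (B n)) (n : ℕ) :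
    volume (Icc 0 1 \ B 0) ≤ volume (Icc 0 1 \ B n) := by
  induction n with
  | zero => exact le_rfl
  | succ n ih =>
    refine ih.trans ?_
    have h := S.diff_null (S.compl_tail hB) (fun n => (hm n).compl) n
    have : Icc (0:ℝ) 1 \ B n ⊆ (Icc 0 1 \ B (n+1)) ∪ (((B n)ᶜ \ (B (n+1))ᶜ) ∩ Icc 0 1) := by
      rintro x ⟨hx, hxB⟩
      by_cases h : x ∈ B (n+1)
      · exact Or.inr ⟨⟨hxB, fun h' => h' h⟩, hx⟩
      · exact Or.inl ⟨hx, h⟩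
    refine (measure_mono this).trans ((measure_union_le _ _).trans ?_)
    rw [h, add_zero]

lemma surj_n (n : ℕ) : ∀ y ∈ Ioo (0:ℝ) 1, ∃ x ∈ Ioo (0:ℝ) 1, S.T^[n] x = y := by
  induction n with
  | zero => exact fun y hy => ⟨y, hy, rfl⟩
  | succ n ih =>
    intro y hy
    obtain ⟨z, hz, rfl⟩ := ih y hy
    have hI := S.ψ_mem_Ioo 0 hz
    refine ⟨S.ψ 0 z, S.Ioo_sub 0 hI, ?_⟩
    rw [Function.iterate_succ_apply, S.hT_eq 0 _ hI, S.φ_ψ 0 (Ioo_subset_Icc_self hz)]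

end IntervalMapSetup

/-- a Markov interval map satisfying (A1)–(A4) is exact w.r.t. Lebesgue
measure: every Borel subset of `[0,1]` belonging to the tail σ-algebra
`⋂ₙ T⁻ⁿ 𝓑([0,1])` is trivial mod Lebesgue. -/
theorem exact_of_intervalMapSetup (S : IntervalMapSetup) :
    ∀ A : Set ℝ, A ⊆ Set.Icc 0 1 → MeasurableSet A →
      (∀ n : ℕ, ∃ B : Set ℝ, B ⊆ Set.Icc 0 1 ∧ MeasurableSet B ∧
        A = Set.Icc 0 1 ∩ S.T^[n] ⁻¹' B) →
      volume A = 0 ∨ volume (Set.Icc 0 1 \ A) = 0 := by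
  intro A hA hAm hT
  choose B hBs hBm hAB using hT
  have hB : S.Tail B := by
    intro n j y hy
    obtain ⟨x, hx, rfl⟩ := S.surj_n n y (S.Ioo_sub j hy)
    have hx' := Ioo_subset_Icc_self hx
    have h1 : x ∈ A ↔ S.T^[n] x ∈ B n := by
      rw [Set.ext_iff.1 (hAB n) x]; exact ⟨fun h => h.2, fun h => ⟨hx', h⟩⟩
    have h2 : x ∈ A ↔ S.T^[n+1] x ∈ B (n+1) := by
      rw [Set.ext_iff.1 (hAB (n+1)) x]; exact ⟨fun h => h.2, fun h => ⟨hx', h⟩⟩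
    rw [← h1, h2, Function.iterate_succ_apply', S.hT_eq j _ hy]
  have hA0 : A = B 0 ∩ Icc 0 1 := by
    rw [hAB 0, inter_comm]; rfl
  by_cases h0 : volume A = 0
  · exact Or.inl h0
  right
  rw [hA0] at h0
  have e : Icc (0:ℝ) 1 \ A = Icc 0 1 \ B 0 := by
    rw [hA0]; ext x; simp only [Set.mem_sdiff, mem_inter_iff]; tauto
  rw [e]
  by_contra hne
  obtain ⟨n, hn⟩ := S.main hB (hBm 0) h0 (ε := volume (Icc 0 1 \ B 0) / 2)
    (by simpa using hne)
  have h1 := (S.vol_const hB hBm n).trans hn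
  have hfin : volume (Icc (0:ℝ) 1 \ B 0) ≠ ⊤ :=
    ne_top_of_le_ne_top (by simp) (measure_mono (sdiff_subset : Icc (0:ℝ) 1 \ B 0 ⊆ Icc 0 1))
  exact absurd h1 (not_le.2 (ENNReal.half_lt_self hne hfin))
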